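/- arXiv:2206.05877 — 2 statements merged into one kernel-verified Lean document; each statement's English description precedes it below -/
import Mathlib

section
/- Let s, w_1, w_2 be complex numbers with Re s > 0, Re w_2 > 0 and Re(w_1 + w_2) > 0. Then Σ_{ℓ_1 = 1}^∞ Σ_{ℓ_2 = 1}^∞ f_{ℓ_1ℓ_2}(s) / ( φ(ℓ_1ℓ_2)·ℓ_1^{w_1+w_2}·ℓ_2^{w_2} ) = ζ(w_1 + w_2 + 1)·ζ(w_2 + 1)·A_1(s, w_1, w_2), where the double series converges absolutely, f_q(s) = ∏_{p | q} (1 − p^{−s})³ (product over primes dividing q), and A_1(s, w_1, w_2) is the convergent product over all primes p of (1 − p^{−(w_1+w_2+1)})·(1 − p^{−(w_2+1)})·( 1 + ((1 − p^{−s})³/(1 − 1/p))·( 1/(p^{w_1+w_2+1} − 1) + 1/(p^{w_2+1} − 1) + 1/((p^{w_1+w_2+1} − 1)(p^{w_2+1} − 1)) ) ). -/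
/-!
Grouping the double series by the product `n = ℓ₁ℓ₂` turns it into the single series of
`F(n) = (f_n(s) / φ(n)) · ∑_{ab = n} a^{-(w₁+w₂)} b^{-w₂}`: the pointwise product of a
multiplicative function with a Dirichlet convolution of two multiplicative functions, hence
multiplicative.

* Absolute convergence (`summable_norm_dterm`): `|f_n(s)| ≤ 8^{ω(n)}` and `φ(n) ≥ n / 2^{ω(n)}`, so
  `f_n(s) / φ(n) ≪ 16^{ω(n)} / n ≪ n^{ε-1}`, and for small `ε` the double series is dominated by a
  product of two convergent series `∑ a^{ε-1-Re(w₁+w₂)}` and `∑ b^{ε-1-Re w₂}`.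
* Local factors (`tsum_grouped_prime_pow`): with `X = p^{-(w₁+w₂+1)}` and `Y = p^{-(w₂+1)}`,
  for `e ≥ 1` one has `F(p^e) = (1 - p^{-s})³ / (1 - 1/p) · ∑_{i+j=e} X^i Y^j`, and summing over
  `e` gives the bracket in the definition of `A₁`.

The Euler product of `∑ F(n)` multiplied by those of `1 / ζ(w₁+w₂+1)` and `1 / ζ(w₂+1)` is the
product defining `A₁`. Both zeta values are nonzero, which gives the factorization.
-/

/-- `f_q(s) = ∏_{p | q} (1 − p^{−s})³`, product over the primes dividing `q`. -/
noncomputable def fq (q : ℕ) (s : ℂ) : ℂ :=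
  ∏ p ∈ q.primeFactors, (1 - (p : ℂ) ^ (-s)) ^ 3

/-- The general term `f_{ℓ₁ℓ₂}(s)/(φ(ℓ₁ℓ₂)·ℓ₁^{w₁+w₂}·ℓ₂^{w₂})` of the double series. -/
noncomputable def dterm (s w1 w2 : ℂ) (l : ℕ × ℕ) : ℂ :=
  fq (l.1 * l.2) s /
    (((l.1 * l.2).totient : ℂ) * (l.1 : ℂ) ^ (w1 + w2) * (l.2 : ℂ) ^ w2)

/-- The Euler product `A₁(s, w₁, w₂)`. -/
noncomputable def A1 (s w1 w2 : ℂ) : ℂ :=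
  ∏' p : Nat.Primes,
    (1 - ((p : ℕ) : ℂ) ^ (-(w1 + w2 + 1))) * (1 - ((p : ℕ) : ℂ) ^ (-(w2 + 1))) *
      (1 + (1 - ((p : ℕ) : ℂ) ^ (-s)) ^ 3 / (1 - 1 / ((p : ℕ) : ℂ)) *
        (1 / (((p : ℕ) : ℂ) ^ (w1 + w2 + 1) - 1) + 1 / (((p : ℕ) : ℂ) ^ (w2 + 1) - 1) +
          1 / ((((p : ℕ) : ℂ) ^ (w1 + w2 + 1) - 1) * (((p : ℕ) : ℂ) ^ (w2 + 1) - 1))))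

/-- The arithmetic function `n ↦ n^{-w}`. For `w ≠ 0` its value at `0` is `(0 ^ w)⁻¹ = 0`. -/
noncomputable def invPow (w : ℂ) (hw : w ≠ 0) : ArithmeticFunction ℂ :=
  ⟨fun n => ((n : ℂ) ^ w)⁻¹, by simp [hw]⟩

/-- The arithmetic function `q ↦ f_q(s) / φ(q)`; at `0` the denominator `φ(0) = 0` gives `0`. -/
noncomputable def fqTot (s : ℂ) : ArithmeticFunction ℂ :=
  ⟨fun n => fq n s / (n.totient : ℂ), by simp⟩

lemma invPow_apply (w : ℂ) (hw : w ≠ 0) (n : ℕ) : invPow w hw n = ((n : ℂ) ^ w)⁻¹ := rfl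

lemma fqTot_apply (s : ℂ) (n : ℕ) : fqTot s n = fq n s / (n.totient : ℂ) := rfl

lemma invPow_isMultiplicative (w : ℂ) (hw : w ≠ 0) : (invPow w hw).IsMultiplicative :=
  ⟨by simp [invPow_apply], fun {m n} _ => by
    simp only [invPow_apply]
    rw [Nat.cast_mul, Complex.natCast_mul_natCast_cpow, mul_inv]⟩

lemma fqTot_isMultiplicative (s : ℂ) : (fqTot s).IsMultiplicative := by
  rw [ArithmeticFunction.IsMultiplicative.iff_ne_zero]
  refine ⟨by simp [fqTot_apply, fq], fun {m n} hm hn h => ?_⟩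
  simp only [fqTot_apply, fq]
  rw [Nat.primeFactors_mul hm hn, Finset.prod_union h.disjoint_primeFactors, Nat.totient_mul h,
    Nat.cast_mul]
  exact mul_div_mul_comm _ _ _ _

lemma dterm_eq (s w1 w2 : ℂ) (h12 : w1 + w2 ≠ 0) (h2 : w2 ≠ 0) (l : ℕ × ℕ) :
    dterm s w1 w2 l = fqTot s (l.1 * l.2) * (invPow (w1 + w2) h12 l.1 * invPow w2 h2 l.2) := by
  simp only [dterm, fqTot_apply, invPow_apply, div_eq_mul_inv, mul_inv, mul_assoc]

/-- `K^{ω(n)} ≪ n^ε`: the prime factors `p` with `p^ε ≥ K` contribute at most `n^ε` altogether,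
and the boundedly many smaller ones contribute a bounded factor. -/
lemma exists_pow_card_primeFactors_le {K ε : ℝ} (hK : 1 ≤ K) (hε : 0 < ε) :
    ∃ C : ℝ, 0 ≤ C ∧ ∀ n : ℕ, n ≠ 0 → K ^ n.primeFactors.card ≤ C * (n : ℝ) ^ ε := by
  obtain ⟨N, hN⟩ : ∃ N : ℕ, ∀ p : ℕ, N ≤ p → K ≤ (p : ℝ) ^ ε := by
    have := ((tendsto_rpow_atTop hε).comp tendsto_natCast_atTop_atTop).eventually_ge_atTop K
    exact Filter.eventually_atTop.1 this
  refine ⟨K ^ N, by positivity, fun n hn => ?_⟩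
  have hsplit := Finset.card_filter_add_card_filter_not (s := n.primeFactors) (fun p => p < N)
  rw [← hsplit, pow_add]
  refine mul_le_mul ?_ ?_ (by positivity) (by positivity)
  · refine pow_le_pow_right₀ hK ?_
    calc _ ≤ (Finset.range N).card := Finset.card_le_card fun p hp => by
            simpa using (Finset.mem_filter.1 hp).2
      _ = N := by simp
  · calc K ^ _ = ∏ p ∈ n.primeFactors with ¬ p < N, K := by rw [Finset.prod_const]
      _ ≤ ∏ p ∈ n.primeFactors with ¬ p < N, (p : ℝ) ^ ε :=
          Finset.prod_le_prod (fun _ _ => by positivity) fun p hp =>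
            hN p (by simpa using (Finset.mem_filter.1 hp).2)
      _ ≤ ∏ p ∈ n.primeFactors, (p : ℝ) ^ ε := by
          refine Finset.prod_le_prod_of_subset_of_one_le (Finset.filter_subset _ _)
            (fun _ _ => by positivity) ?_
          intro p hp _
          exact Real.one_le_rpow (mod_cast (Nat.prime_of_mem_primeFactors hp).one_le) hε.le
      _ = ((∏ p ∈ n.primeFactors, p : ℕ) : ℝ) ^ ε := by
          rw [Real.finsetProd_rpow _ _ (fun _ _ => by positivity), Nat.cast_prod]
      _ ≤ (n : ℝ) ^ ε := by
          refine Real.rpow_le_rpow (by positivity) ?_ hε.le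
          exact_mod_cast Nat.le_of_dvd (Nat.pos_of_ne_zero hn) n.prod_primeFactors_dvd

lemma norm_fq_le {s : ℂ} (hs : 0 < s.re) (n : ℕ) : ‖fq n s‖ ≤ 8 ^ n.primeFactors.card := by
  rw [fq, norm_prod, ← Finset.prod_const]
  refine Finset.prod_le_prod (fun _ _ => norm_nonneg _) fun p hp => ?_
  have hp' := Nat.prime_of_mem_primeFactors hp
  have h1 : ‖(p : ℂ) ^ (-s)‖ ≤ 1 := by
    rw [Complex.norm_natCast_cpow_of_pos hp'.pos]
    exact Real.rpow_le_one_of_one_le_of_nonpos (mod_cast hp'.one_le) (by simp [hs.le])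
  have h2 : ‖1 - (p : ℂ) ^ (-s)‖ ≤ 2 := by
    have := norm_sub_le (1 : ℂ) ((p : ℂ) ^ (-s))
    rw [norm_one] at this
    linarith
  rw [norm_pow]
  calc _ ≤ (2 : ℝ) ^ 3 := by gcongr
    _ = 8 := by norm_num

lemma le_two_pow_mul_totient (n : ℕ) : (n : ℝ) ≤ 2 ^ n.primeFactors.card * n.totient := by
  have h : ((n.totient : ℚ) : ℝ) = ((n * ∏ p ∈ n.primeFactors, (1 - (p : ℚ)⁻¹) : ℚ) : ℝ) := by
    rw [Nat.totient_eq_mul_prod_factors]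
  push_cast at h
  rw [h, ← Finset.prod_const, mul_left_comm, ← Finset.prod_mul_distrib]
  refine le_mul_of_one_le_right (by positivity) ?_
  refine Finset.one_le_prod fun p hp => ?_
  have hp2 : (2 : ℝ) ≤ p := mod_cast (Nat.prime_of_mem_primeFactors hp).two_le
  have : (p : ℝ)⁻¹ ≤ 2⁻¹ := inv_anti₀ (by norm_num) hp2
  linarith

lemma exists_norm_fqTot_le {s : ℂ} (hs : 0 < s.re) {ε : ℝ} (hε : 0 < ε) :
    ∃ C : ℝ, 0 ≤ C ∧ ∀ n : ℕ, n ≠ 0 → ‖fqTot s n‖ ≤ C * (n : ℝ) ^ (ε - 1) := by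
  obtain ⟨C, hC, h⟩ := exists_pow_card_primeFactors_le (K := 16) (by norm_num) hε
  refine ⟨C, hC, fun n hn => ?_⟩
  have hn0 : (0 : ℝ) < n := by positivity
  have ht : (0 : ℝ) < n.totient := by exact_mod_cast Nat.totient_pos.2 (Nat.pos_of_ne_zero hn)
  rw [fqTot_apply, norm_div, Complex.norm_natCast, Real.rpow_sub_one hn0.ne', ← mul_div_assoc,
    div_le_div_iff₀ ht hn0]
  calc ‖fq n s‖ * n ≤ 8 ^ n.primeFactors.card * (2 ^ n.primeFactors.card * n.totient) :=
        mul_le_mul (norm_fq_le hs n) (le_two_pow_mul_totient n) hn0.le (by positivity)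
    _ = 16 ^ n.primeFactors.card * n.totient := by
        rw [← mul_assoc, ← mul_pow]; norm_num
    _ ≤ _ := mul_le_mul_of_nonneg_right (h n hn) ht.le

lemma summable_norm_dterm (s w1 w2 : ℂ)
    (hs : 0 < s.re) (hw2 : 0 < w2.re) (hw12 : 0 < (w1 + w2).re) :
    Summable (fun l : ℕ × ℕ => ‖dterm s w1 w2 l‖) := by
  -- with this `ε` both exponents `ε - 1 - Re (w1 + w2)` and `ε - 1 - Re w2` are below `-1`
  obtain ⟨ε, hε, hε1, hε2⟩ : ∃ ε : ℝ, 0 < ε ∧ ε < (w1 + w2).re ∧ ε < w2.re :=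
    ⟨min (w1 + w2).re w2.re / 2, by positivity,
      by linarith [min_le_left (w1 + w2).re w2.re, lt_min hw12 hw2],
      by linarith [min_le_right (w1 + w2).re w2.re, lt_min hw12 hw2]⟩
  obtain ⟨C, hC, h⟩ := exists_norm_fqTot_le hs hε
  have hsum : Summable fun l : ℕ × ℕ =>
      C * ((l.1 : ℝ) ^ (ε - 1 - (w1 + w2).re) * (l.2 : ℝ) ^ (ε - 1 - w2.re)) := by
    refine Summable.mul_left C ?_
    have ha : Summable fun a : ℕ => (a : ℝ) ^ (ε - 1 - (w1 + w2).re) :=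
      Real.summable_nat_rpow.2 (by linarith)
    have hb : Summable fun b : ℕ => (b : ℝ) ^ (ε - 1 - w2.re) :=
      Real.summable_nat_rpow.2 (by linarith)
    exact ha.mul_of_nonneg hb (fun _ => Real.rpow_nonneg (Nat.cast_nonneg _) _)
      (fun _ => Real.rpow_nonneg (Nat.cast_nonneg _) _)
  refine hsum.of_nonneg_of_le (fun _ => norm_nonneg _) ?_
  rintro ⟨a, b⟩
  rcases eq_or_ne (a * b) 0 with hab | hab
  · rw [dterm, hab]
    simp only [Nat.totient_zero, Nat.cast_zero, zero_mul, div_zero, norm_zero]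
    positivity
  · have ha : 0 < a := Nat.pos_of_ne_zero (left_ne_zero_of_mul hab)
    have hb : 0 < b := Nat.pos_of_ne_zero (right_ne_zero_of_mul hab)
    have h12 : w1 + w2 ≠ 0 := fun h0 => by simp [h0] at hw12
    have h2 : w2 ≠ 0 := fun h0 => by simp [h0] at hw2
    rw [dterm_eq s w1 w2 h12 h2, norm_mul, norm_mul, invPow_apply, invPow_apply, norm_inv,
      norm_inv, Complex.norm_natCast_cpow_of_pos ha, Complex.norm_natCast_cpow_of_pos hb,
      Real.rpow_sub (by positivity), Real.rpow_sub (by positivity) _ w2.re]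
    refine (mul_le_mul_of_nonneg_right (h _ hab) (by positivity)).trans_eq ?_
    rw [Nat.cast_mul, Real.mul_rpow (by positivity) (by positivity)]
    simp only [div_eq_mul_inv]
    ring

/-- The arithmetic function `n ↦ ∑_{ab = n} dterm (a, b)` obtained by grouping the double series
according to the product `ab`. -/
noncomputable def grouped (s w1 w2 : ℂ) (h12 : w1 + w2 ≠ 0) (h2 : w2 ≠ 0) :
    ArithmeticFunction ℂ :=
  (fqTot s).pmul (invPow (w1 + w2) h12 * invPow w2 h2)

lemma grouped_isMultiplicative (s w1 w2 : ℂ) (h12 : w1 + w2 ≠ 0) (h2 : w2 ≠ 0) :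
    (grouped s w1 w2 h12 h2).IsMultiplicative :=
  (fqTot_isMultiplicative s).pmul
    ((invPow_isMultiplicative _ h12).mul (invPow_isMultiplicative _ h2))

lemma tsum_fiber_dterm (s w1 w2 : ℂ) (h12 : w1 + w2 ≠ 0) (h2 : w2 ≠ 0) (n : ℕ) :
    ∑' l : (fun l : ℕ × ℕ => l.1 * l.2) ⁻¹' {n}, dterm s w1 w2 l = grouped s w1 w2 h12 h2 n := by
  rcases eq_or_ne n 0 with rfl | hn
  · rw [ArithmeticFunction.map_zero]
    convert! tsum_zero with l
    have : l.1.1 * l.1.2 = 0 := l.2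
    rw [dterm, this]
    simp
  · have hset : (fun l : ℕ × ℕ => l.1 * l.2) ⁻¹' {n} = (n.divisorsAntidiagonal : Set (ℕ × ℕ)) := by
      ext l
      simp [hn]
    rw [hset, Finset.tsum_subtype' n.divisorsAntidiagonal (dterm s w1 w2), grouped,
      ArithmeticFunction.pmul_apply, ArithmeticFunction.mul_apply, Finset.mul_sum]
    refine Finset.sum_congr rfl fun l hl => ?_
    rw [dterm_eq s w1 w2 h12 h2, (Nat.mem_divisorsAntidiagonal.1 hl).1]

lemma grouped_prime_pow (s w1 w2 : ℂ) (h12 : w1 + w2 ≠ 0) (h2 : w2 ≠ 0) {p : ℕ} (hp : p.Prime)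
    (e : ℕ) :
    grouped s w1 w2 h12 h2 (p ^ (e + 1)) = (1 - (p : ℂ) ^ (-s)) ^ 3 / (1 - 1 / (p : ℂ)) *
      ∑ k ∈ Finset.HasAntidiagonal.antidiagonal (e + 1),
        ((p : ℂ) ^ (-(w1 + w2 + 1))) ^ k.1 * ((p : ℂ) ^ (-(w2 + 1))) ^ k.2 := by
  have hp0 : (p : ℂ) ≠ 0 := by exact_mod_cast hp.ne_zero
  have hp1 : (p : ℂ) - 1 ≠ 0 := sub_ne_zero.2 (by exact_mod_cast hp.ne_one)
  have hpow (w : ℂ) (k : ℕ) : (((p ^ k : ℕ) : ℂ) ^ w)⁻¹ = ((p : ℂ) ^ (-(w + 1))) ^ k * p ^ k := by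
    rw [Nat.cast_pow, ← Complex.natCast_cpow_natCast_mul, mul_comm (k : ℂ) w, Complex.cpow_mul_nat,
      ← inv_pow, ← mul_pow, Complex.cpow_neg, Complex.cpow_add _ _ hp0, Complex.cpow_one, mul_inv,
      mul_assoc, inv_mul_cancel₀ hp0, mul_one]
  rw [grouped, ArithmeticFunction.pmul_apply, ArithmeticFunction.mul_apply,
    Nat.sum_divisorsAntidiagonal (fun i j => invPow (w1 + w2) h12 i * invPow w2 h2 j),
    Nat.sum_divisors_prime_pow hp, fqTot_apply, fq, Nat.primeFactors_prime_pow (by simp) hp,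
    Finset.prod_singleton, Nat.totient_prime_pow_succ hp,
    Finset.Nat.sum_antidiagonal_eq_sum_range_succ
      (fun i j => ((p : ℂ) ^ (-(w1 + w2 + 1))) ^ i * ((p : ℂ) ^ (-(w2 + 1))) ^ j)]
  have hterm : ∀ i ∈ Finset.range (e + 1 + 1),
      invPow (w1 + w2) h12 (p ^ i) * invPow w2 h2 (p ^ (e + 1) / p ^ i) =
        (p : ℂ) ^ (e + 1) *
          (((p : ℂ) ^ (-(w1 + w2 + 1))) ^ i * ((p : ℂ) ^ (-(w2 + 1))) ^ (e + 1 - i)) := by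
    intro i hi
    have hi' : i ≤ e + 1 := Nat.lt_succ_iff.1 (Finset.mem_range.1 hi)
    rw [Nat.pow_div hi' hp.pos, invPow_apply, invPow_apply, hpow, hpow]
    have hsplit : (p : ℂ) ^ (e + 1) = (p : ℂ) ^ i * (p : ℂ) ^ (e + 1 - i) := by
      rw [← pow_add, Nat.add_sub_cancel' hi']
    rw [hsplit]
    ring
  rw [Finset.sum_congr rfl hterm, ← Finset.mul_sum, ← mul_assoc]
  congr 1
  rw [Nat.cast_mul, Nat.cast_pow, Nat.cast_sub hp.one_le, Nat.cast_one]
  field_simp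
  ring

lemma norm_prime_cpow_lt_one {p : ℕ} (hp : p.Prime) {w : ℂ} (hw : 0 < w.re) :
    ‖(p : ℂ) ^ (-(w + 1))‖ < 1 := by
  rw [Complex.norm_natCast_cpow_of_pos hp.pos]
  refine Real.rpow_lt_one_of_one_lt_of_neg (mod_cast hp.one_lt) ?_
  simp only [Complex.neg_re, Complex.add_re, Complex.one_re]
  linarith

/-- The local factor at `p`. The double geometric series over exponents `(i, j) ≠ (0, 0)` equals
`1 / ((1 - X) (1 - Y)) - 1`, which is rewritten in terms of `X⁻¹ - 1` and `Y⁻¹ - 1`. -/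
lemma tsum_grouped_prime_pow (s w1 w2 : ℂ) (hw2 : 0 < w2.re) (hw12 : 0 < (w1 + w2).re)
    (h12 : w1 + w2 ≠ 0) (h2 : w2 ≠ 0) {p : ℕ} (hp : p.Prime)
    (hsum : Summable fun e => grouped s w1 w2 h12 h2 (p ^ e)) :
    ∑' e, grouped s w1 w2 h12 h2 (p ^ e) =
      1 + (1 - (p : ℂ) ^ (-s)) ^ 3 / (1 - 1 / (p : ℂ)) *
        (1 / ((p : ℂ) ^ (w1 + w2 + 1) - 1) + 1 / ((p : ℂ) ^ (w2 + 1) - 1) +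
          1 / (((p : ℂ) ^ (w1 + w2 + 1) - 1) * ((p : ℂ) ^ (w2 + 1) - 1))) := by
  have hX := norm_prime_cpow_lt_one hp hw12
  have hY := norm_prime_cpow_lt_one hp hw2
  have hp0 : (p : ℂ) ≠ 0 := by exact_mod_cast hp.ne_zero
  have hX0 : (p : ℂ) ^ (-(w1 + w2 + 1)) ≠ 0 := by simp [Complex.cpow_eq_zero_iff, hp0]
  have hY0 : (p : ℂ) ^ (-(w2 + 1)) ≠ 0 := by simp [Complex.cpow_eq_zero_iff, hp0]
  have hXi : (p : ℂ) ^ (w1 + w2 + 1) = ((p : ℂ) ^ (-(w1 + w2 + 1)))⁻¹ := by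
    rw [Complex.cpow_neg, inv_inv]
  have hYi : (p : ℂ) ^ (w2 + 1) = ((p : ℂ) ^ (-(w2 + 1)))⁻¹ := by
    rw [Complex.cpow_neg, inv_inv]
  rw [hsum.tsum_eq_zero_add, pow_zero, (grouped_isMultiplicative s w1 w2 h12 h2).map_one]
  simp_rw [grouped_prime_pow s w1 w2 h12 h2 hp]
  rw [tsum_mul_left, hXi, hYi]
  generalize (p : ℂ) ^ (-(w1 + w2 + 1)) = X at *
  generalize (p : ℂ) ^ (-(w2 + 1)) = Y at *
  have hXs : Summable fun i : ℕ => ‖X ^ i‖ := by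
    simpa only [norm_pow] using summable_geometric_of_lt_one (norm_nonneg _) hX
  have hYs : Summable fun i : ℕ => ‖Y ^ i‖ := by
    simpa only [norm_pow] using summable_geometric_of_lt_one (norm_nonneg _) hY
  have hprod := tsum_mul_tsum_eq_tsum_sum_antidiagonal_of_summable_norm hXs hYs
  rw [tsum_geometric_of_norm_lt_one hX, tsum_geometric_of_norm_lt_one hY,
    (summable_norm_sum_mul_antidiagonal_of_summable_norm hXs hYs).of_norm.tsum_eq_zero_add] at hprod
  simp only [Finset.HasAntidiagonal.antidiagonal_zero, Finset.sum_singleton, pow_zero, mul_one] at hprod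
  rw [← sub_eq_iff_eq_add'] at hprod
  rw [← hprod]
  have hX1 : 1 - X ≠ 0 := sub_ne_zero.2 fun h => by simp [← h] at hX
  have hY1 : 1 - Y ≠ 0 := sub_ne_zero.2 fun h => by simp [← h] at hY
  have eX : X⁻¹ - 1 = (1 - X) / X := by field_simp
  have eY : Y⁻¹ - 1 = (1 - Y) / Y := by field_simp
  rw [eX, eY]
  congr 2
  field_simp
  ring

theorem double_dirichlet_series_factorization (s w1 w2 : ℂ)
    (hs : 0 < s.re) (hw2 : 0 < w2.re) (hw12 : 0 < (w1 + w2).re) :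
    Summable (fun l : ℕ × ℕ => ‖dterm s w1 w2 l‖) ∧
    ∑' l : ℕ × ℕ, dterm s w1 w2 l =
      riemannZeta (w1 + w2 + 1) * riemannZeta (w2 + 1) * A1 s w1 w2 := by
  have hsum := summable_norm_dterm s w1 w2 hs hw2 hw12
  refine ⟨hsum, ?_⟩
  have h12 : w1 + w2 ≠ 0 := fun h0 => by simp [h0] at hw12
  have h2 : w2 ≠ 0 := fun h0 => by simp [h0] at hw2
  have hz12 : 1 < (w1 + w2 + 1).re := by rw [Complex.add_re, Complex.one_re]; linarith
  have hz2 : 1 < (w2 + 1).re := by rw [Complex.add_re, Complex.one_re]; linarith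
  set F := grouped s w1 w2 h12 h2 with hF
  have htot : ∑' l : ℕ × ℕ, dterm s w1 w2 l = ∑' n, F n := by
    have := (hsum.of_norm.hasSum.tsum_fiberwise (fun l : ℕ × ℕ => l.1 * l.2)).tsum_eq
    simp_rw [tsum_fiber_dterm s w1 w2 h12 h2] at this
    exact this.symm
  have hFsum : Summable fun n => ‖F n‖ := by
    refine (hsum.hasSum.tsum_fiberwise (fun l : ℕ × ℕ => l.1 * l.2)).summable.of_nonneg_of_le
      (fun _ => norm_nonneg _) fun n => ?_
    rw [hF, ← tsum_fiber_dterm s w1 w2 h12 h2]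
    exact norm_tsum_le_tsum_norm (hsum.subtype _)
  have hEuler := (grouped_isMultiplicative s w1 w2 h12 h2).eulerProduct_hasProd hFsum
  have hzeta {z : ℂ} (hz : 1 < z.re) :
      HasProd (fun p : Nat.Primes => 1 - ((p : ℕ) : ℂ) ^ (-z)) (riemannZeta z)⁻¹ := by
    simpa only [inv_inv] using
      (riemannZeta_eulerProduct_hasProd hz).inv₀ (riemannZeta_ne_zero_of_one_lt_re hz)
  have hA := ((hzeta hz12).mul (hzeta hz2)).mul hEuler
  have hA1 : A1 s w1 w2 =
      (riemannZeta (w1 + w2 + 1))⁻¹ * (riemannZeta (w2 + 1))⁻¹ * ∑' n, F n := by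
    rw [← hA.tprod_eq, A1]
    refine tprod_congr fun p => ?_
    rw [tsum_grouped_prime_pow s w1 w2 hw2 hw12 h12 h2 p.2
      (hFsum.of_norm.comp_injective (Nat.pow_right_injective p.2.two_le))]
  rw [htot, hA1]
  have e1 := riemannZeta_ne_zero_of_one_lt_re hz12
  have e2 := riemannZeta_ne_zero_of_one_lt_re hz2
  field_simp
end

section
/- Let p be a prime and let s, w_1, w_2 be complex numbers with Re(w_1 + w_2) > −1 and Re w_2 > −1. Define f_{p^m}(s) = (1 − p^{−s})³ for integers m ≥ 1 and f_{p^0}(s) = 1. Then the absolutely convergent double series Σ_{j_1 ≥ 0} Σ_{j_2 ≥ 0} f_{p^{j_1+j_2}}(s) / ( φ(p^{j_1+j_2})·p^{j_1(w_1+w_2) + j_2 w_2} ) equals 1 + ((1 − p^{−s})³/(1 − 1/p))·( 1/(p^{w_1+w_2+1} − 1) + 1/(p^{w_2+1} − 1) + 1/((p^{w_1+w_2+1} − 1)(p^{w_2+1} − 1)) ). -/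
/-!
Put `x = p^{-(w₁+w₂+1)}`, `y = p^{-(w₂+1)}` and `C = (1 − p^{−s})³ / (1 − 1/p)`. Since
`φ(p^m) = p^m (1 − 1/p)` for `m ≥ 1`, the general term at `(j₁, j₂) ≠ (0, 0)` is `C x^{j₁} y^{j₂}`,
while at the origin it is `1`. The series is therefore `C` times a product of two geometric
series, absolutely convergent because `|x|, |y| < 1`, plus the correction `1 − C` at the origin,
so its sum is `C / ((1 − x)(1 − y)) + 1 − C`.
-/

/-- The general term of the local double series at the prime `p`:
`f_{p^{j₁+j₂}}(s) / (φ(p^{j₁+j₂})·p^{j₁(w₁+w₂) + j₂w₂})`, where `f_{p^m}(s) = (1 − p^{−s})³`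
for `m ≥ 1` and `f_{p⁰}(s) = 1`. -/
noncomputable def lterm (p : ℕ) (s w1 w2 : ℂ) (j : ℕ × ℕ) : ℂ :=
  (if j.1 + j.2 = 0 then 1 else (1 - (p : ℂ) ^ (-s)) ^ 3) /
    (((p ^ (j.1 + j.2)).totient : ℂ) * (p : ℂ) ^ ((j.1 : ℂ) * (w1 + w2) + (j.2 : ℂ) * w2))

theorem norm_cpow_neg_lt_one {p : ℕ} (hp : p.Prime) {w : ℂ} (hw : -1 < w.re) :
    ‖((p : ℂ) ^ (w + 1))⁻¹‖ < 1 := by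
  rw [norm_inv, Complex.norm_natCast_cpow_of_pos hp.pos]
  apply inv_lt_one_of_one_lt₀
  apply Real.one_lt_rpow (by exact_mod_cast hp.one_lt)
  simp only [Complex.add_re, Complex.one_re]
  linarith

/-- The general term is a product of geometric terms, up to a correction at the origin, where
`φ(p⁰) = 1` and `f_{p⁰}(s) = 1` break the pattern. -/
theorem lterm_eq {p : ℕ} (hp : p.Prime) (s w1 w2 : ℂ) (j : ℕ × ℕ) :
    lterm p s w1 w2 j =
      (1 - (p : ℂ) ^ (-s)) ^ 3 / (1 - 1 / (p : ℂ)) *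
        (((p : ℂ) ^ (w1 + w2 + 1))⁻¹ ^ j.1 * ((p : ℂ) ^ (w2 + 1))⁻¹ ^ j.2) +
      if j = 0 then 1 - (1 - (p : ℂ) ^ (-s)) ^ 3 / (1 - 1 / (p : ℂ)) else 0 := by
  obtain ⟨a, b⟩ := j
  have hp0 : (p : ℂ) ≠ 0 := by exact_mod_cast hp.ne_zero
  by_cases h : a + b = 0
  · obtain ⟨rfl, rfl⟩ : a = 0 ∧ b = 0 := by omega
    simp [lterm]
  · have h' : ((a, b) : ℕ × ℕ) ≠ 0 := by
      intro h0
      simp only [Prod.mk_eq_zero] at h0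
      omega
    have ht : (((p ^ (a + b)).totient : ℕ) : ℂ) = (p : ℂ) ^ (a + b) * (1 - 1 / (p : ℂ)) := by
      rw [Nat.totient_prime_pow hp (Nat.pos_of_ne_zero h)]
      obtain ⟨m, hm⟩ := Nat.exists_eq_succ_of_ne_zero h
      rw [hm, Nat.succ_sub_one, Nat.succ_eq_add_one, Nat.cast_mul, Nat.cast_pow,
        Nat.cast_sub hp.one_le, Nat.cast_one]
      field_simp
      ring
    simp only [lterm, h, h', if_false, add_zero]
    rw [ht, Complex.cpow_add _ _ hp0, Complex.cpow_add (w1 + w2) 1 hp0, Complex.cpow_add w2 1 hp0,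
      Complex.cpow_one, Complex.cpow_nat_mul, Complex.cpow_nat_mul]
    simp only [div_eq_mul_inv, mul_inv, inv_pow, mul_pow, pow_add]
    ring

theorem local_double_series (p : ℕ) (hp : p.Prime) (s w1 w2 : ℂ)
    (h12 : -1 < (w1 + w2).re) (h2 : -1 < w2.re) :
    Summable (fun j : ℕ × ℕ => ‖lterm p s w1 w2 j‖) ∧
    ∑' j : ℕ × ℕ, lterm p s w1 w2 j =
      1 + (1 - (p : ℂ) ^ (-s)) ^ 3 / (1 - 1 / (p : ℂ)) *
        (1 / ((p : ℂ) ^ (w1 + w2 + 1) - 1) + 1 / ((p : ℂ) ^ (w2 + 1) - 1) +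
          1 / (((p : ℂ) ^ (w1 + w2 + 1) - 1) * ((p : ℂ) ^ (w2 + 1) - 1))) := by
  have hx := norm_cpow_neg_lt_one hp h12
  have hy := norm_cpow_neg_lt_one hp h2
  have hX0 : (p : ℂ) ^ (w1 + w2 + 1) ≠ 0 := by
    simp [Complex.cpow_eq_zero_iff, hp.ne_zero]
  have hY0 : (p : ℂ) ^ (w2 + 1) ≠ 0 := by
    simp [Complex.cpow_eq_zero_iff, hp.ne_zero]
  rw [funext (lterm_eq hp s w1 w2)]
  generalize (p : ℂ) ^ (w1 + w2 + 1) = X at *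
  generalize (p : ℂ) ^ (w2 + 1) = Y at *
  generalize (1 - (p : ℂ) ^ (-s)) ^ 3 / (1 - 1 / (p : ℂ)) = C
  have hX1 : X - 1 ≠ 0 := by
    intro h
    rw [sub_eq_zero.mp h] at hx
    simp at hx
  have hY1 : Y - 1 ≠ 0 := by
    intro h
    rw [sub_eq_zero.mp h] at hy
    simp at hy
  have hs : Summable fun j : ℕ × ℕ => ‖X⁻¹ ^ j.1 * Y⁻¹ ^ j.2‖ :=
    (summable_norm_geometric_of_norm_lt_one hx).mul_norm
      (summable_norm_geometric_of_norm_lt_one hy)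
  have hprod := ((hasSum_geometric_of_norm_lt_one hx).mul
    (hasSum_geometric_of_norm_lt_one hy) hs.of_norm).mul_left C
  have hsum := hprod.add (hasSum_ite_eq (0 : ℕ × ℕ) (1 - C))
  refine ⟨hsum.summable.norm, hsum.tsum_eq.trans ?_⟩
  have hX : 1 - X⁻¹ = (X - 1) / X := by field_simp
  have hY : 1 - Y⁻¹ = (Y - 1) / Y := by field_simp
  rw [hX, hY]
  field_simp
  ring
end
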